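/- Let H be a nonzero complex Hilbert space and T a bounded operator on H with ‖T‖ < 1. Then the spectra of the symmetric second quantization Γ^⊙(T) on the symmetric Fock space and of the second quantization Γ(T) on the full Fock space coincide, and both equal {1} ∪ closure( ⋃_{n≥1} { Π_{j=1}^n λ_j : λ_j ∈ σ(T) } ). -/

import Mathlib

open scoped InnerProductSpace

/-- An abstract presentation of the `n`-fold Hilbert tensor power of `H`:
a Hilbert space `Hn` together with a map `emb` sending `(x 1, …, x n)` to the
elementary tensor `x 1 ⊗ ⋯ ⊗ x n`, such that inner products of elementary
tensors multiply and the elementary tensors span a dense subspace. -/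
structure TensorPowerStructure (H Hn : Type*) [NormedAddCommGroup H]
    [InnerProductSpace ℂ H] [NormedAddCommGroup Hn] [InnerProductSpace ℂ Hn]
    (n : ℕ) where
  emb : (Fin n → H) → Hn
  inner_emb : ∀ x y : Fin n → H, ⟪emb x, emb y⟫_ℂ = ∏ i, ⟪x i, y i⟫_ℂ
  dense_span : Dense ((Submodule.span ℂ (Set.range emb) : Submodule ℂ Hn) : Set Hn)

/-- `Tn` is the `n`-fold tensor power `T^{⊗n}` of `T`, acting as `T` on each
factor of elementary tensors. -/
def IsTensorPowerOp {H Hn : Type*} [NormedAddCommGroup H] [InnerProductSpace ℂ H]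
    [NormedAddCommGroup Hn] [InnerProductSpace ℂ Hn] {n : ℕ}
    (tp : TensorPowerStructure H Hn n) (T : H →L[ℂ] H) (Tn : Hn →L[ℂ] Hn) : Prop :=
  ∀ x : Fin n → H, Tn (tp.emb x) = tp.emb fun i => T (x i)

/-- The symmetric subspace `H^{⊙n}` of the Hilbert tensor power `H^{⊗n}`: the
closed subspace spanned by the symmetric tensors `Σ_{σ ∈ Sₙ} x_{σ(1)} ⊗ ⋯ ⊗ x_{σ(n)}`. -/
def symSubspace {H Hn : Type*} [NormedAddCommGroup H] [InnerProductSpace ℂ H]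
    [NormedAddCommGroup Hn] [InnerProductSpace ℂ Hn] {n : ℕ}
    (tp : TensorPowerStructure H Hn n) : Submodule ℂ Hn :=
  (Submodule.span ℂ
    {y : Hn | ∃ x : Fin n → H,
      y = ∑ σ : Equiv.Perm (Fin n), tp.emb (x ∘ σ)}).topologicalClosure

/-!
The Fock spaces are Hilbert sums of the tensor powers, on which `T^{⊗n}` has norm at most `‖T‖ ^ n`,
so the spectrum of a second quantization is the closure of the union of the spectra of its
components. It remains to see that `T^{⊗n}` and `T^{⊙n}` both have as spectrum the set of products
`λ₁ ⋯ λₙ` with `λⱼ ∈ σ(T)`.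

The spectrum of `T^{⊙n}` lies in that of `T^{⊗n}`, which is a product of `n` commuting copies of
`T`, so Gelfand theory makes every point of its spectrum a product of points of `σ(T)`.
Conversely, if all `λⱼ` are approximate eigenvalues of `T`, symmetrized tensors of unit approximate
eigenvectors are approximate eigenvectors of `T^{⊙n}`: their norms stay away from `0` because some
vector of norm at most `1` has inner products bounded below with all `n` eigenvectors. If the
conjugates of the `λⱼ` are approximate eigenvalues of `T†`, the same applies to the adjoint. Every
product can be brought into one of these two forms: the points of `σ(T)` that fail the first
condition and those that fail the second form disjoint open sets, and a tuple containing one of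
each can be rescaled, keeping its product, so as to increase `∑ |λⱼ|`, whose maximum is attained.
-/

section CommutingProducts

theorem spectrum_coe_centralizer {R A : Type*} [CommRing R] [Ring A] [Algebra R A] {s : Set A}
    (a : Subalgebra.centralizer R s) : spectrum R (a : A) = spectrum R a := by
  refine (spectrum.subset_subalgebra a).antisymm fun z hz hunit => hz ?_
  obtain ⟨u, hu⟩ := hunit
  have hu_mem : (u : A) ∈ Subalgebra.centralizer R s :=
    hu ▸ sub_mem (algebraMap_mem _ z) a.2
  have hinv_mem : (↑u⁻¹ : A) ∈ Subalgebra.centralizer R s := fun g hg =>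
    (Commute.units_inv_right (hu_mem g hg) : Commute g _)
  exact ⟨⟨⟨u, hu_mem⟩, ⟨_, hinv_mem⟩, Subtype.ext u.mul_inv, Subtype.ext u.inv_mul⟩,
    Subtype.ext hu⟩

/-- Characters of the bicommutant of the `a i`, a commutative Banach algebra, give the spectra. -/
theorem exists_eq_prod_of_mem_spectrum_noncommProd {ι A : Type*} [Fintype ι] [NormedRing A]
    [NormedAlgebra ℂ A] [CompleteSpace A] (a : ι → A)
    (hcomm : ((Finset.univ : Finset ι) : Set ι).Pairwise (Function.onFun Commute a)) {z : ℂ}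
    (hz : z ∈ spectrum ℂ (Finset.univ.noncommProd a hcomm)) :
    ∃ l : ι → ℂ, (∀ i, l i ∈ spectrum ℂ (a i)) ∧ z = ∏ i, l i := by
  set s : Set A := Set.range a
  have hs : ∀ x ∈ s, ∀ y ∈ s, x * y = y * x := by
    rintro _ ⟨i, rfl⟩ _ ⟨j, rfl⟩
    exact hcomm.of_refl (Finset.mem_coe.2 (Finset.mem_univ i))
      (Finset.mem_coe.2 (Finset.mem_univ j))
  let B := Subalgebra.centralizer ℂ s.centralizer
  let _ : NormedCommRing B :=
    { (inferInstance : NormedRing B) with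
      mul_comm := fun x y => Subtype.ext
        (Set.centralizer_centralizer_comm_of_comm hs x x.2 y y.2) }
  have : CompleteSpace B := (Set.isClosed_centralizer s.centralizer).completeSpace_coe
  let b : ι → B := fun i => ⟨a i, Set.subset_centralizer_centralizer (Set.mem_range_self i)⟩
  have hprod : Finset.univ.noncommProd a hcomm = ((∏ i, b i : B) : A) := by
    rw [← Finset.noncommProd_eq_prod]
    exact (Finset.map_noncommProd _ b _ B.val).symm
  rw [hprod, spectrum_coe_centralizer] at hz
  obtain ⟨χ, hχ⟩ := WeakDual.CharacterSpace.mem_spectrum_iff_exists.1 hz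
  refine ⟨fun i => χ (b i), fun i => ?_, by rw [← hχ, map_prod]⟩
  have := AlgHom.apply_mem_spectrum χ (b i)
  rwa [← spectrum_coe_centralizer] at this

end CommutingProducts

section ApproximatePointSpectrum
open ContinuousLinearMap

/-- The approximate point spectrum of `T`: the `z` for which `z - T` is not bounded below. Being
bounded below is expressed as being antilipschitz. -/
def approximatePointSpectrum {𝕜 E : Type*} [NormedField 𝕜] [SeminormedAddCommGroup E]
    [NormedSpace 𝕜 E] (T : E →L[𝕜] E) : Set 𝕜 :=
  {z | ¬ ∃ K, AntilipschitzWith K (algebraMap 𝕜 (E →L[𝕜] E) z - T)}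

theorem algebraMap_sub_apply {𝕜 E : Type*} [NormedField 𝕜] [SeminormedAddCommGroup E]
    [NormedSpace 𝕜 E] (z : 𝕜) (T : E →L[𝕜] E) (x : E) :
    (algebraMap 𝕜 (E →L[𝕜] E) z - T) x = z • x - T x := rfl

theorem exists_norm_eq_one_of_mem_approximatePointSpectrum {𝕜 E : Type*} [RCLike 𝕜]
    [NormedAddCommGroup E] [NormedSpace 𝕜 E] {T : E →L[𝕜] E} {z : 𝕜}
    (hz : z ∈ approximatePointSpectrum T) {ε : ℝ} (hε : 0 < ε) :
    ∃ x, ‖x‖ = 1 ∧ ‖T x - z • x‖ < ε := by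
  contrapose! hz
  refine not_not.2 (antilipschitzWith_iff_exists_mul_le_norm.2 ⟨ε, hε, fun x => ?_⟩)
  obtain rfl | hx := eq_or_ne x 0
  · simp
  have hunit := hz ((‖x‖⁻¹ : 𝕜) • x) (norm_smul_inv_norm hx)
  rw [map_smul, smul_comm z, ← smul_sub, norm_smul, norm_inv, RCLike.norm_coe_norm,
    inv_mul_eq_div, le_div_iff₀ (norm_pos_iff.2 hx), norm_sub_rev] at hunit
  exact hunit

section Banach
variable {𝕜 E : Type*} [NontriviallyNormedField 𝕜] [NormedAddCommGroup E] [NormedSpace 𝕜 E]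

theorem exists_antilipschitzWith_of_isUnit {A : E →L[𝕜] E} (hA : IsUnit A) :
    ∃ K, AntilipschitzWith K A := by
  obtain ⟨u, rfl⟩ := hA
  exact ⟨_, (ContinuousLinearEquiv.unitsEquiv 𝕜 E u).antilipschitz⟩

theorem approximatePointSpectrum_subset_spectrum (T : E →L[𝕜] E) :
    approximatePointSpectrum T ⊆ spectrum 𝕜 T :=
  fun _ hz hunit => hz (exists_antilipschitzWith_of_isUnit hunit)

variable [CompleteSpace E]

theorem isUnit_of_norm_sub_lt_of_le_norm {A : E →L[𝕜] E} {u : (E →L[𝕜] E)ˣ} {c : ℝ}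
    (hA : ‖A - u‖ < c) (hu : ∀ x, c * ‖x‖ ≤ ‖(u : E →L[𝕜] E) x‖) : IsUnit A := by
  nontriviality E →L[𝕜] E
  have hc : 0 < c := (norm_nonneg _).trans_lt hA
  have hinv : ‖(↑u⁻¹ : E →L[𝕜] E)‖ ≤ c⁻¹ := by
    refine opNorm_le_bound _ (inv_nonneg.2 hc.le) fun y => ?_
    rw [inv_mul_eq_div, le_div_iff₀' hc]
    have huy := hu ((↑u⁻¹ : E →L[𝕜] E) y)
    rwa [← mul_apply_eq_comp, u.mul_inv, one_apply_eq_self] at huy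
  exact (u.ofNearby A (hA.trans_le ((le_inv_comm₀ hc (Units.norm_pos _)).2 hinv))).isUnit

theorem isOpen_antilipschitzWith_and_not_isUnit :
    IsOpen {A : E →L[𝕜] E | (∃ K, AntilipschitzWith K A) ∧ ¬ IsUnit A} := by
  simp only [antilipschitzWith_iff_exists_mul_le_norm]
  refine Metric.isOpen_iff.2 fun A ⟨⟨c, hc, hbound⟩, hnot⟩ => ⟨c / 2, half_pos hc, fun B hB => ?_⟩
  rw [mem_ball_iff_norm] at hB
  have hBbound : ∀ x, c / 2 * ‖x‖ ≤ ‖B x‖ := fun x => by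
    have hsub : ‖A x‖ - ‖B x‖ ≤ c / 2 * ‖x‖ :=
      (norm_sub_norm_le _ _).trans ((norm_sub_rev _ _).trans_le ((B - A).le_of_opNorm_le hB.le x))
    linarith [hbound x]
  refine ⟨⟨c / 2, half_pos hc, hBbound⟩, ?_⟩
  rintro ⟨u, rfl⟩
  exact hnot (isUnit_of_norm_sub_lt_of_le_norm (norm_sub_rev A u ▸ hB) hBbound)

theorem isOpen_spectrum_diff_approximatePointSpectrum (T : E →L[𝕜] E) :
    IsOpen (spectrum 𝕜 T \ approximatePointSpectrum T) := by
  have hcont : Continuous fun z => algebraMap 𝕜 (E →L[𝕜] E) z - T := by fun_prop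
  convert isOpen_antilipschitzWith_and_not_isUnit.preimage hcont using 1
  ext z
  exact and_comm.trans (and_congr_left fun _ => not_not)

end Banach

section Hilbert
variable {𝕜 E : Type*} [RCLike 𝕜] [NormedAddCommGroup E] [InnerProductSpace 𝕜 E] [CompleteSpace E]

theorem star_mem_spectrum_adjoint_iff (T : E →L[𝕜] E) {z : 𝕜} :
    star z ∈ spectrum 𝕜 (adjoint T) ↔ z ∈ spectrum 𝕜 T := by
  rw [← star_eq_adjoint, spectrum.map_star, Set.star_mem_star]

theorem mem_approximatePointSpectrum_or_star_mem {T : E →L[𝕜] E} {z : 𝕜}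
    (hz : z ∈ spectrum 𝕜 T) :
    z ∈ approximatePointSpectrum T ∨ star z ∈ approximatePointSpectrum (adjoint T) := by
  by_contra! hboth
  obtain ⟨⟨K, hK⟩, ⟨K', hK'⟩⟩ := And.imp not_not.1 not_not.1 hboth
  set A : E →L[𝕜] E := algebraMap 𝕜 (E →L[𝕜] E) z - T with hA
  have hadj : adjoint A = algebraMap 𝕜 (E →L[𝕜] E) (star z) - adjoint T := by
    rw [hA, ← star_eq_adjoint, star_sub, algebraMap_star_comm]; rfl
  rw [← hadj] at hK'
  have hker : (A.range)ᗮ = ⊥ := by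
    rw [orthogonal_range]; exact LinearMap.ker_eq_bot.2 hK'.injective
  refine hz (isUnit_iff_bijective.2 (A.bijective_iff_dense_range_and_antilipschitz.2 ⟨?_, K, hK⟩))
  rw [← Submodule.topologicalClosure_eq_top_iff] at hker
  exact hker

end Hilbert
end ApproximatePointSpectrum

section Mixing
open Filter Topology

variable {𝕜 : Type*} [RCLike 𝕜]

theorem exists_pos_scaling_norm_add_norm_lt {U V : Set 𝕜} (hU : IsOpen U) (hV : IsOpen V)
    {a b : 𝕜} (ha : a ∈ U) (hb : b ∈ V) (hab : ¬(a = 0 ∧ b = 0)) :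
    ∃ r : ℝ, 0 < r ∧ r • a ∈ U ∧ r⁻¹ • b ∈ V ∧ ‖a‖ + ‖b‖ < r * ‖a‖ + r⁻¹ * ‖b‖ := by
  wlog hle : ‖b‖ ≤ ‖a‖ generalizing U V a b
  · obtain ⟨r, hr, hrb, hra, hlt⟩ := this hV hU hb ha (by tauto) (le_of_not_ge hle)
    refine ⟨r⁻¹, inv_pos.2 hr, hra, by rwa [inv_inv], ?_⟩
    rw [inv_inv]
    linarith
  have ha0 : 0 < ‖a‖ := norm_pos_iff.2 fun h =>
    hab ⟨h, norm_le_zero_iff.1 (by simpa [h] using hle)⟩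
  have hUr : ∀ᶠ r : ℝ in 𝓝 1, r • a ∈ U :=
    (continuous_id.smul continuous_const).continuousAt.eventually_mem
      (hU.mem_nhds (by simpa using ha))
  have hVr : ∀ᶠ r : ℝ in 𝓝 1, r⁻¹ • b ∈ V :=
    ((continuousAt_inv₀ one_ne_zero).smul continuousAt_const).eventually_mem
      (hV.mem_nhds (by simpa using hb))
  obtain ⟨r, ⟨hra, hrb⟩, hr : 1 < r⟩ := (((hUr.and hVr).filter_mono nhdsWithin_le_nhds).and
    (self_mem_nhdsWithin (s := Set.Ioi 1))).exists
  have hr0 : 0 < r := one_pos.trans hr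
  refine ⟨r, hr0, hra, hrb, sub_pos.1 ?_⟩
  calc 0 < (r - 1) * r⁻¹ * (r * ‖a‖ - ‖b‖) :=
        mul_pos (mul_pos (sub_pos.2 hr) (inv_pos.2 hr0)) (by nlinarith)
    _ = r * ‖a‖ + r⁻¹ * ‖b‖ - (‖a‖ + ‖b‖) := by field_simp; ring

theorem exists_prod_eq_and_sum_norm_lt {ι : Type*} [Fintype ι] {K U V : Set 𝕜} (hU : IsOpen U)
    (hV : IsOpen V) (hUK : U ⊆ K) (hVK : V ⊆ K) (hUV : Disjoint U V) {l : ι → 𝕜}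
    (hl : ∀ k, l k ∈ K) {i j : ι} (hi : l i ∈ U) (hj : l j ∈ V) :
    ∃ m : ι → 𝕜, (∀ k, m k ∈ K) ∧ ∏ k, m k = ∏ k, l k ∧ ∑ k, ‖l k‖ < ∑ k, ‖m k‖ := by
  classical
  have hij : i ≠ j := by rintro rfl; exact hUV.notMem_of_mem_left hi hj
  obtain ⟨r, hr, hri, hrj, hlt⟩ := exists_pos_scaling_norm_add_norm_lt hU hV hi hj
    fun h => hUV.notMem_of_mem_left hi (h.1.trans h.2.symm ▸ hj)
  let c : ι → ℝ := Function.update (Function.update 1 i r) j r⁻¹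
  have hci : c i = r := by simp [c, hij]
  have hcj : c j = r⁻¹ := by simp [c]
  have hck : ∀ k, k ≠ i ∧ k ≠ j → c k = 1 := fun k hk => by simp [c, hk.1, hk.2]
  refine ⟨c • l, fun k => ?_, ?_, ?_⟩
  · rw [Pi.smul_apply']
    obtain rfl | hki := eq_or_ne k i
    · exact hUK (hci ▸ hri)
    obtain rfl | hkj := eq_or_ne k j
    · exact hVK (hcj ▸ hrj)
    · rw [hck k ⟨hki, hkj⟩, one_smul]
      exact hl k
  · simp only [Pi.smul_apply']
    rw [Finset.prod_smul, Fintype.prod_eq_mul i j hij hck, hci, hcj, mul_inv_cancel₀ hr.ne',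
      one_smul]
  · simp only [Pi.smul_apply']
    rw [← sub_pos, ← Finset.sum_sub_distrib,
      Fintype.sum_eq_add i j hij fun k hk => by rw [hck k hk, one_smul, sub_self], hci, hcj,
      norm_smul, norm_smul, Real.norm_of_nonneg hr.le, Real.norm_of_nonneg (inv_pos.2 hr).le]
    linarith

/-- Among the tuples in `K` with the given product, one maximising `∑ ‖m i‖` works. -/
theorem exists_prod_eq_and_forall_notMem_or_forall_notMem {ι : Type*} [Fintype ι]
    {K U V : Set 𝕜} (hK : IsCompact K) (hU : IsOpen U) (hV : IsOpen V) (hUK : U ⊆ K)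
    (hVK : V ⊆ K) (hUV : Disjoint U V) {l : ι → 𝕜} (hl : ∀ i, l i ∈ K) :
    ∃ m : ι → 𝕜, (∀ i, m i ∈ K) ∧ ∏ i, m i = ∏ i, l i ∧
      ((∀ i, m i ∉ U) ∨ ∀ i, m i ∉ V) := by
  have hcompact : IsCompact (Set.univ.pi (fun _ => K) ∩ {m : ι → 𝕜 | ∏ i, m i = ∏ i, l i}) :=
    (isCompact_univ_pi fun _ => hK).inter_right (isClosed_eq (by fun_prop) continuous_const)
  obtain ⟨m, ⟨hmK, hmprod⟩, hmax⟩ := hcompact.exists_isMaxOn ⟨l, fun i _ => hl i, rfl⟩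
    (f := fun m => ∑ i, ‖m i‖) (by fun_prop)
  refine ⟨m, fun i => hmK i trivial, hmprod, ?_⟩
  by_contra! hmixed
  obtain ⟨⟨i, hi⟩, ⟨j, hj⟩⟩ := hmixed
  obtain ⟨m', hm'K, hm'prod, hlt⟩ :=
    exists_prod_eq_and_sum_norm_lt hU hV hUK hVK hUV (fun k => hmK k trivial) hi hj
  exact hlt.not_ge (hmax ⟨fun k _ => hm'K k, hm'prod.trans hmprod⟩)

end Mixing

section TestVector

theorem exists_forall_pow_card_le_norm_inner {𝕜 E ι : Type*} [RCLike 𝕜] [NormedAddCommGroup E]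
    [InnerProductSpace 𝕜 E] (x : ι → E) (s : Finset ι) (hx : ∀ i ∈ s, ‖x i‖ = 1) :
    ∃ y : E, ‖y‖ ≤ 1 - (1 / 4) ^ s.card ∧ ∀ i ∈ s, (1 / 4) ^ s.card ≤ ‖⟪y, x i⟫_𝕜‖ := by
  classical
  induction s using Finset.induction_on with
  | empty => exact ⟨0, by simp⟩
  | insert a s has ih =>
    rw [Finset.forall_mem_insert] at hx
    obtain ⟨y, hy, hyx⟩ := ih hx.2
    simp only [Finset.card_insert_of_notMem has, pow_succ, Finset.forall_mem_insert]
    set c : ℝ := (1 / 4) ^ s.card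
    have hc : 0 < c := by positivity
    by_cases hya : c * (1 / 4) ≤ ‖⟪y, x a⟫_𝕜‖
    · exact ⟨y, by linarith, hya, fun i hi => by linarith [hyx i hi]⟩
    have hnorm : ‖((c / 2 : ℝ) : 𝕜)‖ = c / 2 := by
      rw [RCLike.norm_ofReal, abs_of_pos (half_pos hc)]
    have hinner : ∀ i, ⟪y + ((c / 2 : ℝ) : 𝕜) • x a, x i⟫_𝕜 =
        ⟪y, x i⟫_𝕜 + ((c / 2 : ℝ) : 𝕜) * ⟪x a, x i⟫_𝕜 := fun i => by
      rw [inner_add_left, inner_smul_left, RCLike.conj_ofReal]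
    refine ⟨y + ((c / 2 : ℝ) : 𝕜) • x a, ?_, ?_, fun i hi => ?_⟩
    · have htri := norm_add_le y (((c / 2 : ℝ) : 𝕜) • x a)
      rw [norm_smul, hnorm, hx.1] at htri
      linarith
    · have htri := norm_sub_le_norm_add (((c / 2 : ℝ) : 𝕜)) ⟪y, x a⟫_𝕜
      rw [hinner, inner_self_eq_norm_sq_to_K, hx.1, RCLike.ofReal_one, one_pow, mul_one, add_comm]
      linarith
    · have htri := norm_sub_le_norm_add ⟪y, x i⟫_𝕜 (((c / 2 : ℝ) : 𝕜) * ⟪x a, x i⟫_𝕜)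
      have hcs := norm_inner_le_norm (𝕜 := 𝕜) (x a) (x i)
      rw [norm_mul, hnorm, ← hinner] at htri
      rw [hx.1, hx.2 i hi] at hcs
      nlinarith [hyx i hi]

end TestVector

section HilbertSum
open ContinuousLinearMap Filter Topology

theorem eq_of_forall_inner_left_eq_of_dense_span {𝕜 E : Type*} [RCLike 𝕜] [NormedAddCommGroup E]
    [InnerProductSpace 𝕜 E] {s : Set E} (hs : Dense (Submodule.span 𝕜 s : Set E)) {x y : E}
    (h : ∀ w ∈ s, ⟪x, w⟫_𝕜 = ⟪y, w⟫_𝕜) : x = y :=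
  innerSL_inj.1 (ContinuousLinearMap.ext_on hs h)

theorem spectrum_subset_of_intertwines {𝕜 E F : Type*} [RCLike 𝕜] [NormedAddCommGroup E]
    [InnerProductSpace 𝕜 E] [CompleteSpace E] [NormedAddCommGroup F] [InnerProductSpace 𝕜 F]
    [CompleteSpace F] {J : E →ₗᵢ[𝕜] F} {A : E →L[𝕜] E} {G : F →L[𝕜] F}
    (hG : ∀ x, G (J x) = J (A x)) (hGadj : ∀ x, adjoint G (J x) = J (adjoint A x)) :
    spectrum 𝕜 A ⊆ spectrum 𝕜 G := by
  rintro z hz ⟨u, hu⟩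
  let j : E →L[𝕜] F := J.toContinuousLinearMap
  let R : F →L[𝕜] F := ↑u⁻¹
  have hjj : ∀ x, adjoint j (j x) = x := fun x => DFunLike.congr_fun J.adjoint_comp_self x
  have hju : ∀ x, (u : F →L[𝕜] F) (j x) = j (z • x - A x) := fun x => by
    rw [hu]
    simp [j, hG, Algebra.algebraMap_eq_smul_one]
  have huj : ∀ y, z • adjoint j y - A (adjoint j y) = adjoint j ((u : F →L[𝕜] F) y) := fun y => by
    refine ext_inner_left 𝕜 fun x => ?_
    have : ⟪x, A (adjoint j y)⟫_𝕜 = ⟪x, adjoint j (G y)⟫_𝕜 := by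
      rw [← adjoint_inner_left, adjoint_inner_right, adjoint_inner_right, ← adjoint_inner_left G]
      exact congrArg (⟪·, y⟫_𝕜) (hGadj x).symm
    rw [hu]
    simp [Algebra.algebraMap_eq_smul_one, inner_sub_right, this]
  have hRu : ∀ y, R ((u : F →L[𝕜] F) y) = y := DFunLike.congr_fun u.inv_mul
  have huR : ∀ y, (u : F →L[𝕜] F) (R y) = y := DFunLike.congr_fun u.mul_inv
  refine hz ⟨⟨algebraMap 𝕜 _ z - A, adjoint j ∘L R ∘L j, ?_, ?_⟩, rfl⟩
  · ext x
    exact (huj (R (j x))).trans ((congrArg _ (huR _)).trans (hjj x))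
  · ext x
    exact (congrArg (adjoint j ∘L R) (hju x).symm).trans ((congrArg _ (hRu _)).trans (hjj x))

section OrthogonalFamily

variable {𝕜 ι F : Type*} {E : ι → Type*} [RCLike 𝕜] [∀ i, NormedAddCommGroup (E i)]
  [∀ i, InnerProductSpace 𝕜 (E i)] [NormedAddCommGroup F] [InnerProductSpace 𝕜 F]
  {J : ∀ i, E i →ₗᵢ[𝕜] F} {A : ∀ i, E i →L[𝕜] E i} {G : F →L[𝕜] F}

theorem exists_eq_sum_of_mem_span_iUnion_range {y : F}
    (hy : y ∈ Submodule.span 𝕜 (⋃ i, Set.range (J i))) :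
    ∃ (s : Finset ι) (v : ∀ i, E i), y = ∑ i ∈ s, J i (v i) := by
  have hspan : Submodule.span 𝕜 (⋃ i, Set.range (J i)) =
      ⨆ i, LinearMap.range (J i).toLinearMap := by
    rw [Submodule.span_iUnion]
    exact iSup_congr fun i => Submodule.span_eq (LinearMap.range (J i).toLinearMap)
  rw [hspan, Submodule.mem_iSup_iff_exists_finsupp] at hy
  obtain ⟨f, hf, rfl⟩ := hy
  choose v hv using hf
  exact ⟨f.support, v, Finset.sum_congr rfl fun i _ => (hv i).symm⟩

theorem mul_norm_le_norm_apply_of_orthogonalFamily (hJ : OrthogonalFamily 𝕜 E J)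
    (hdense : Dense (Submodule.span 𝕜 (⋃ i, Set.range (J i)) : Set F))
    (hG : ∀ i x, G (J i x) = J i (A i x)) {c : ℝ} (hc : 0 ≤ c)
    (hA : ∀ i x, c * ‖x‖ ≤ ‖A i x‖) (y : F) : c * ‖y‖ ≤ ‖G y‖ := by
  refine hdense.induction (P := fun y => c * ‖y‖ ≤ ‖G y‖) (fun y hy => ?_)
    (isClosed_le (by fun_prop) (by fun_prop)) y
  obtain ⟨s, v, rfl⟩ := exists_eq_sum_of_mem_span_iUnion_range hy
  refine le_of_sq_le_sq ?_ (norm_nonneg _)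
  simp only [map_sum, hG]
  rw [mul_pow, hJ.norm_sum, hJ.norm_sum, Finset.mul_sum]
  refine Finset.sum_le_sum fun i _ => ?_
  rw [← mul_pow]
  exact pow_le_pow_left₀ (by positivity) (hA i _) 2

theorem isUnit_of_orthogonalFamily [CompleteSpace F] (hJ : OrthogonalFamily 𝕜 E J)
    (hdense : Dense (Submodule.span 𝕜 (⋃ i, Set.range (J i)) : Set F))
    (hG : ∀ i x, G (J i x) = J i (A i x)) (hA : ∀ i, Function.Surjective (A i)) {c : ℝ}
    (hc : 0 < c) (hbound : ∀ i x, c * ‖x‖ ≤ ‖A i x‖) : IsUnit G := by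
  refine isUnit_iff_bijective.2 (G.bijective_iff_dense_range_and_antilipschitz.2 ⟨?_, ?_⟩)
  · have hrange : Submodule.span 𝕜 (⋃ i, Set.range (J i)) ≤ G.range := by
      rw [Submodule.span_le, Set.iUnion_subset_iff]
      rintro i _ ⟨x, rfl⟩
      obtain ⟨x, rfl⟩ := hA i x
      exact ⟨J i x, hG i x⟩
    exact (Submodule.dense_iff_topologicalClosure_eq_top.1 (hdense.mono hrange))
  · exact antilipschitzWith_iff_exists_mul_le_norm.2
      ⟨c, hc, mul_norm_le_norm_apply_of_orthogonalFamily hJ hdense hG hc.le hbound⟩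

theorem adjoint_apply_of_orthogonalFamily [CompleteSpace F] [∀ i, CompleteSpace (E i)]
    (hJ : OrthogonalFamily 𝕜 E J)
    (hdense : Dense (Submodule.span 𝕜 (⋃ i, Set.range (J i)) : Set F))
    (hG : ∀ i x, G (J i x) = J i (A i x)) (i : ι) (x : E i) :
    adjoint G (J i x) = J i (adjoint (A i) x) := by
  refine eq_of_forall_inner_left_eq_of_dense_span hdense fun w hw => ?_
  obtain ⟨j, y, rfl⟩ := Set.mem_iUnion.1 hw
  rw [adjoint_inner_left, hG]
  obtain rfl | hij := eq_or_ne i j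
  · rw [LinearIsometry.inner_map_map, LinearIsometry.inner_map_map, adjoint_inner_left]
  · rw [hJ hij, hJ hij]

end OrthogonalFamily

section DiagonalSpectrum

variable {ι F : Type*} {E : ι → Type*} [∀ i, NormedAddCommGroup (E i)]

section Banach

variable [∀ i, NormedSpace ℂ (E i)] [∀ i, CompleteSpace (E i)] {A : ∀ i, E i →L[ℂ] E i}

theorem exists_pos_eventually_mul_norm_le {f : Filter ι}
    (hA : Tendsto (fun i => ‖A i‖) f (𝓝 0)) {z : ℂ}
    (hz : z ∉ closure (⋃ i, spectrum ℂ (A i))) :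
    ∃ c > 0, ∀ᶠ i in f, ∀ x, c * ‖x‖ ≤ ‖(algebraMap ℂ (E i →L[ℂ] E i) z - A i) x‖ := by
  obtain rfl | hz0 := eq_or_ne z 0
  · obtain ⟨ε, hε, hball⟩ : ∃ ε > 0, ∀ w ∈ ⋃ i, spectrum ℂ (A i), ε ≤ dist 0 w := by
      simpa [Metric.mem_closure_iff] using hz
    refine ⟨1, one_pos, (hA.eventually_lt_const hε).mono fun i hi x => ?_⟩
    have : Subsingleton (E i) := by
      by_contra! hnt
      obtain ⟨w, hw⟩ := spectrum.nonempty (A i)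
      have hwε := hball w (Set.mem_iUnion_of_mem i hw)
      rw [dist_zero_left] at hwε
      exact (hwε.trans (spectrum.norm_le_norm_of_mem hw)).not_gt hi
    simp [Subsingleton.elim x 0]
  · have hz2 : 0 < ‖z‖ / 2 := half_pos (norm_pos_iff.2 hz0)
    refine ⟨‖z‖ / 2, hz2, (hA.eventually_lt_const hz2).mono fun i hi x => ?_⟩
    have htri : ‖z • x‖ - ‖A i x‖ ≤ ‖z • x - A i x‖ := norm_sub_norm_le _ _
    rw [norm_smul] at htri
    have hAx := (A i).le_of_opNorm_le hi.le x
    rw [algebraMap_sub_apply]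
    linarith

theorem exists_pos_forall_mul_norm_le (hA : Tendsto (fun i => ‖A i‖) cofinite (𝓝 0)) {z : ℂ}
    (hz : z ∉ closure (⋃ i, spectrum ℂ (A i))) :
    ∃ c > 0, ∀ i x, c * ‖x‖ ≤ ‖(algebraMap ℂ (E i →L[ℂ] E i) z - A i) x‖ := by
  let BoundedBelow : ℝ → ι → Prop := fun c i =>
    ∀ x, c * ‖x‖ ≤ ‖(algebraMap ℂ (E i →L[ℂ] E i) z - A i) x‖
  have hanti {c δ : ℝ} {i : ι} (hδ : δ ≤ c) (h : BoundedBelow c i) : BoundedBelow δ i :=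
    fun x => (mul_le_mul_of_nonneg_right hδ (norm_nonneg x)).trans (h x)
  obtain ⟨c, hc, hcofinite⟩ : ∃ c > 0, ∀ᶠ i in cofinite, BoundedBelow c i :=
    exists_pos_eventually_mul_norm_le hA hz
  have hfinite : ∀ᶠ δ in 𝓝[>] 0, ∀ i ∈ {i | ¬ BoundedBelow c i}, BoundedBelow δ i := by
    refine (eventually_all_finite hcofinite).2 fun i _ => ?_
    have hunit : IsUnit (algebraMap ℂ (E i →L[ℂ] E i) z - A i) :=
      spectrum.notMem_iff.1 fun h => hz (subset_closure (Set.mem_iUnion_of_mem i h))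
    obtain ⟨ci, hci, h⟩ :=
      antilipschitzWith_iff_exists_mul_le_norm.1 (exists_antilipschitzWith_of_isUnit hunit)
    exact ((eventually_le_nhds hci).filter_mono nhdsWithin_le_nhds).mono fun δ hδ => hanti hδ h
  obtain ⟨δ, ⟨hδ, hδc⟩, hδ0 : 0 < δ⟩ := ((hfinite.and
    (nhdsWithin_le_nhds (eventually_le_nhds hc))).and self_mem_nhdsWithin).exists
  exact ⟨δ, hδ0, fun i => (em (BoundedBelow c i)).elim (hanti hδc) (hδ i)⟩

end Banach

theorem spectrum_eq_closure_iUnion_of_orthogonalFamily [∀ i, InnerProductSpace ℂ (E i)]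
    [∀ i, CompleteSpace (E i)] [NormedAddCommGroup F] [InnerProductSpace ℂ F] [CompleteSpace F]
    {J : ∀ i, E i →ₗᵢ[ℂ] F} {A : ∀ i, E i →L[ℂ] E i} {G : F →L[ℂ] F}
    (hJ : OrthogonalFamily ℂ E J)
    (hdense : Dense (Submodule.span ℂ (⋃ i, Set.range (J i)) : Set F))
    (hG : ∀ i x, G (J i x) = J i (A i x)) (hA : Tendsto (fun i => ‖A i‖) cofinite (𝓝 0)) :
    spectrum ℂ G = closure (⋃ i, spectrum ℂ (A i)) := by
  refine Set.Subset.antisymm (fun z hz => ?_) (closure_minimal (Set.iUnion_subset fun i =>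
    spectrum_subset_of_intertwines (hG i) (adjoint_apply_of_orthogonalFamily hJ hdense hG i))
    (spectrum.isClosed G))
  contrapose! hz
  obtain ⟨c, hc, hbound⟩ := exists_pos_forall_mul_norm_le hA hz
  have hcomp : ∀ i x, (algebraMap ℂ (F →L[ℂ] F) z - G) (J i x) =
      J i ((algebraMap ℂ (E i →L[ℂ] E i) z - A i) x) := fun i x => by
    rw [algebraMap_sub_apply, algebraMap_sub_apply, hG, map_sub, map_smul]
  have hsurj : ∀ i, Function.Surjective (algebraMap ℂ (E i →L[ℂ] E i) z - A i) := fun i =>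
    (isUnit_iff_bijective.1 (spectrum.notMem_iff.1 fun h =>
      hz (subset_closure (Set.mem_iUnion_of_mem i h)))).2
  exact spectrum.notMem_iff.2 (isUnit_of_orthogonalFamily hJ hdense hcomp hsurj hc hbound)

end DiagonalSpectrum
end HilbertSum

section TensorPower
open ContinuousLinearMap

/-- Any `R` with `R† R = ‖S‖ ^ 2 - S† S` works. -/
theorem exists_inner_add_inner_eq_norm_sq_mul {H : Type*} [NormedAddCommGroup H]
    [InnerProductSpace ℂ H] [CompleteSpace H] (S : H →L[ℂ] H) : ∃ R : H →L[ℂ] H, ∀ x y,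
    ⟪S x, S y⟫_ℂ + ⟪R x, R y⟫_ℂ = ((‖S‖ ^ 2 : ℝ) : ℂ) * ⟪x, y⟫_ℂ := by
  obtain ⟨R, hR⟩ := CStarAlgebra.nonneg_iff_eq_star_mul_self.1
    (sub_nonneg.2 (CStarAlgebra.star_mul_le_algebraMap_norm_sq (a := S)))
  refine ⟨R, fun x y => ?_⟩
  have hstar : ∀ Q : H →L[ℂ] H, ⟪Q x, Q y⟫_ℂ = ⟪x, (star Q * Q) y⟫_ℂ := fun Q =>
    (adjoint_inner_right Q x (Q y)).symm
  rw [hstar S, hstar R, ← hR, ← inner_add_right, sub_apply, add_sub_cancel,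
    Algebra.algebraMap_eq_smul_one]
  simp [inner_smul_right_eq_smul]

namespace TensorPowerStructure

variable {H Hn : Type*} [NormedAddCommGroup H] [InnerProductSpace ℂ H]
  [NormedAddCommGroup Hn] [InnerProductSpace ℂ Hn] {n : ℕ} (tp : TensorPowerStructure H Hn n)

section Elementary

theorem ext_inner_emb {v w : Hn} (h : ∀ x, ⟪v, tp.emb x⟫_ℂ = ⟪w, tp.emb x⟫_ℂ) : v = w :=
  eq_of_forall_inner_left_eq_of_dense_span tp.dense_span (Set.forall_mem_range.2 h)

theorem continuousLinearMap_ext {A B : Hn →L[ℂ] Hn} (h : ∀ x, A (tp.emb x) = B (tp.emb x)) :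
    A = B :=
  ContinuousLinearMap.ext_on tp.dense_span (Set.eqOn_range.2 (funext h))

theorem inner_emb_update_update (i : Fin n) (x y : Fin n → H) (a b : H) :
    ⟪tp.emb (Function.update x i a), tp.emb (Function.update y i b)⟫_ℂ =
      ⟪a, b⟫_ℂ * ∏ j ∈ Finset.univ.erase i, ⟪x j, y j⟫_ℂ := by
  rw [tp.inner_emb, ← Finset.mul_prod_erase _ _ (Finset.mem_univ i), Function.update_self,
    Function.update_self]
  refine congrArg _ (Finset.prod_congr rfl fun j hj => ?_)
  rw [Function.update_of_ne (Finset.ne_of_mem_erase hj),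
    Function.update_of_ne (Finset.ne_of_mem_erase hj)]

theorem inner_emb_update_left (i : Fin n) (x y : Fin n → H) (a : H) :
    ⟪tp.emb (Function.update x i a), tp.emb y⟫_ℂ =
      ⟪a, y i⟫_ℂ * ∏ j ∈ Finset.univ.erase i, ⟪x j, y j⟫_ℂ := by
  simpa only [Function.update_eq_self] using tp.inner_emb_update_update i x y a (y i)

/-- The elementary tensor `x 1 ⊗ ⋯ ⊗ x n` as a multilinear map of `x`. -/
def embMultilinear : MultilinearMap ℂ (fun _ : Fin n => H) Hn :=
  MultilinearMap.mk' tp.emb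
    (fun x i a b => tp.ext_inner_emb fun y => by
      simp only [inner_add_left, inner_emb_update_left, add_mul])
    (fun x i c a => tp.ext_inner_emb fun y => by
      simp only [inner_smul_left, inner_emb_update_left, mul_assoc])

theorem norm_emb (x : Fin n → H) : ‖tp.emb x‖ = ∏ i, ‖x i‖ := by
  have hsq := congrArg norm (tp.inner_emb x x)
  simp only [inner_self_eq_norm_sq_to_K, norm_prod, norm_pow, Complex.coe_algebraMap,
    Complex.norm_real, norm_norm, Finset.prod_pow] at hsq
  exact (sq_eq_sq₀ (norm_nonneg _) (by positivity)).1 hsq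

end Elementary

section Slot

theorem inner_linearCombination_emb_update_self (i : Fin n) (S : H →L[ℂ] H)
    (c : (Fin n → H) →₀ ℂ) :
    ⟪Finsupp.linearCombination ℂ (fun x => tp.emb (Function.update x i (S (x i)))) c,
      Finsupp.linearCombination ℂ (fun x => tp.emb (Function.update x i (S (x i)))) c⟫_ℂ =
    ∑ x ∈ c.support, ∑ y ∈ c.support, c y * star (c x) *
      (⟪S (x i), S (y i)⟫_ℂ * ∏ j ∈ Finset.univ.erase i, ⟪x j, y j⟫_ℂ) := by
  rw [Finsupp.linearCombination_apply, Finsupp.sum, sum_inner]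
  simp only [inner_sum, inner_smul_left, inner_smul_right, inner_emb_update_update, mul_assoc,
    starRingEnd_apply]

variable [CompleteSpace H]

theorem norm_linearCombination_emb_update_le (i : Fin n) (S : H →L[ℂ] H)
    (c : (Fin n → H) →₀ ℂ) :
    ‖Finsupp.linearCombination ℂ (fun x => tp.emb (Function.update x i (S (x i)))) c‖ ≤
      ‖S‖ * ‖Finsupp.linearCombination ℂ tp.emb c‖ := by
  obtain ⟨R, hR⟩ := exists_inner_add_inner_eq_norm_sq_mul S
  let L : (H →L[ℂ] H) → Hn := fun Q =>
    Finsupp.linearCombination ℂ (fun x => tp.emb (Function.update x i (Q (x i)))) c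
  have hL1 : L 1 = Finsupp.linearCombination ℂ tp.emb c := by
    simp only [L, one_apply_eq_self, Function.update_eq_self]
  have hinner : ⟪L S, L S⟫_ℂ + ⟪L R, L R⟫_ℂ = ((‖S‖ ^ 2 : ℝ) : ℂ) * ⟪L 1, L 1⟫_ℂ := by
    simp only [L, inner_linearCombination_emb_update_self, ← Finset.sum_add_distrib,
      Finset.mul_sum]
    refine Finset.sum_congr rfl fun x _ => Finset.sum_congr rfl fun y _ => ?_
    rw [← mul_add, ← add_mul, hR]
    simp only [one_apply_eq_self]
    ring
  have hnorm : ‖L S‖ ^ 2 + ‖L R‖ ^ 2 = ‖S‖ ^ 2 * ‖L 1‖ ^ 2 := by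
    rw [← Complex.ofReal_inj]
    simpa [inner_self_eq_norm_sq_to_K] using hinner
  rw [← hL1]
  refine le_of_sq_le_sq ?_ (by positivity)
  rw [mul_pow, ← hnorm]
  exact le_add_of_nonneg_right (sq_nonneg _)

variable [CompleteSpace Hn]

theorem exists_norm_le_and_apply_emb_eq_update (i : Fin n) (S : H →L[ℂ] H) :
    ∃ Q : Hn →L[ℂ] Hn, ‖Q‖ ≤ ‖S‖ ∧
      ∀ x, Q (tp.emb x) = tp.emb (Function.update x i (S (x i))) := by
  let L := Finsupp.linearCombination ℂ tp.emb
  let LS := Finsupp.linearCombination ℂ fun x => tp.emb (Function.update x i (S (x i)))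
  have hbound : ∀ c, ‖LS c‖ ≤ ‖S‖ * ‖L c‖ := tp.norm_linearCombination_emb_update_le i S
  have hdense : DenseRange L := by
    have := tp.dense_span
    rwa [← Finsupp.range_linearCombination] at this
  refine ⟨LS.extendOfNorm L, LinearMap.opNorm_extendOfNorm_le hdense (norm_nonneg _) hbound,
    fun x => ?_⟩
  simpa [L, LS] using LinearMap.extendOfNorm_eq hdense ⟨_, hbound⟩ (Finsupp.single x 1)

/-- The operator `1 ⊗ ⋯ ⊗ S ⊗ ⋯ ⊗ 1` with `S` in the `i`-th slot, the continuous
extension of its action on elementary tensors. -/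
noncomputable def slot (i : Fin n) (S : H →L[ℂ] H) : Hn →L[ℂ] Hn :=
  (tp.exists_norm_le_and_apply_emb_eq_update i S).choose

theorem norm_slot_le (i : Fin n) (S : H →L[ℂ] H) : ‖tp.slot i S‖ ≤ ‖S‖ :=
  (tp.exists_norm_le_and_apply_emb_eq_update i S).choose_spec.1

theorem slot_emb (i : Fin n) (S : H →L[ℂ] H) (x : Fin n → H) :
    tp.slot i S (tp.emb x) = tp.emb (Function.update x i (S (x i))) :=
  (tp.exists_norm_le_and_apply_emb_eq_update i S).choose_spec.2 x

/-- `slot i` as a homomorphism of algebras, so that it does not enlarge spectra. -/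
noncomputable def slotAlgHom (i : Fin n) : (H →L[ℂ] H) →ₐ[ℂ] (Hn →L[ℂ] Hn) :=
  AlgHom.ofLinearMap
    { toFun := tp.slot i
      map_add' := fun S R => tp.continuousLinearMap_ext fun x => by
        simp only [add_apply, slot_emb]
        exact tp.embMultilinear.map_update_add x i _ _
      map_smul' := fun c S => tp.continuousLinearMap_ext fun x => by
        simp only [smul_apply, slot_emb]
        exact tp.embMultilinear.map_update_smul x i _ _ }
    (tp.continuousLinearMap_ext fun x => by simp [slot_emb])
    (fun S R => tp.continuousLinearMap_ext fun x => by simp [slot_emb])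

theorem commute_slot {i j : Fin n} (hij : i ≠ j) (S R : H →L[ℂ] H) :
    Commute (tp.slot i S) (tp.slot j R) :=
  tp.continuousLinearMap_ext fun x => by
    simp only [mul_apply_eq_comp, slot_emb, Function.update_of_ne hij,
      Function.update_of_ne hij.symm, Function.update_comm hij]

theorem pairwise_commute_slot (T : H →L[ℂ] H) (s : Finset (Fin n)) :
    (s : Set (Fin n)).Pairwise (Function.onFun Commute fun i => tp.slot i T) :=
  fun _ _ _ _ hij => tp.commute_slot hij T T

theorem noncommProd_slot_emb (T : H →L[ℂ] H) (s : Finset (Fin n)) (x : Fin n → H) :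
    s.noncommProd (fun i => tp.slot i T) (tp.pairwise_commute_slot T s) (tp.emb x) =
      tp.emb (s.piecewise (fun i => T (x i)) x) := by
  induction s using Finset.induction_on with
  | empty => simp
  | insert i s his ih =>
    rw [Finset.noncommProd_insert_of_notMem _ _ _ _ his, mul_apply_eq_comp, ih, slot_emb,
      Finset.piecewise_insert, Finset.piecewise_eq_of_notMem _ _ _ his]

theorem norm_noncommProd_slot_le (T : H →L[ℂ] H) (s : Finset (Fin n)) :
    ‖s.noncommProd (fun i => tp.slot i T) (tp.pairwise_commute_slot T s)‖ ≤ ‖T‖ ^ s.card := by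
  induction s using Finset.induction_on with
  | empty => exact norm_id_le
  | insert i s his ih =>
    rw [Finset.noncommProd_insert_of_notMem _ _ _ _ his, Finset.card_insert_of_notMem his,
      pow_succ']
    exact (norm_mul_le _ _).trans
      (mul_le_mul (tp.norm_slot_le i T) ih (norm_nonneg _) (norm_nonneg _))

end Slot

end TensorPowerStructure

namespace IsTensorPowerOp

variable {H Hn : Type*} [NormedAddCommGroup H] [InnerProductSpace ℂ H] [CompleteSpace H]
  [NormedAddCommGroup Hn] [InnerProductSpace ℂ Hn] [CompleteSpace Hn] {n : ℕ}
  {tp : TensorPowerStructure H Hn n} {T : H →L[ℂ] H} {Tn : Hn →L[ℂ] Hn}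

theorem eq_noncommProd_slot (hTn : IsTensorPowerOp tp T Tn) :
    Tn = Finset.univ.noncommProd (fun i => tp.slot i T) (tp.pairwise_commute_slot T _) :=
  tp.continuousLinearMap_ext fun x => by
    rw [hTn, tp.noncommProd_slot_emb, Finset.piecewise_univ]

theorem norm_le_pow (hTn : IsTensorPowerOp tp T Tn) : ‖Tn‖ ≤ ‖T‖ ^ n := by
  simpa only [Finset.card_univ, Fintype.card_fin, ← hTn.eq_noncommProd_slot] using
    tp.norm_noncommProd_slot_le T Finset.univ

theorem exists_eq_prod_of_mem_spectrum (hTn : IsTensorPowerOp tp T Tn) {z : ℂ}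
    (hz : z ∈ spectrum ℂ Tn) : ∃ l : Fin n → ℂ, (∀ j, l j ∈ spectrum ℂ T) ∧ z = ∏ j, l j := by
  rw [hTn.eq_noncommProd_slot] at hz
  obtain ⟨l, hl, rfl⟩ := exists_eq_prod_of_mem_spectrum_noncommProd _ _ hz
  exact ⟨l, fun j => AlgHom.spectrum_apply_subset (tp.slotAlgHom j) T (hl j), rfl⟩

protected theorem adjoint (hTn : IsTensorPowerOp tp T Tn) :
    IsTensorPowerOp tp (adjoint T) (adjoint Tn) := fun x => tp.ext_inner_emb fun y => by
  simp only [adjoint_inner_left, hTn y, tp.inner_emb]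

end IsTensorPowerOp
end TensorPower

section SymmetricPower
open ContinuousLinearMap

namespace TensorPowerStructure

variable {H Hn : Type*} [NormedAddCommGroup H] [InnerProductSpace ℂ H]
  [NormedAddCommGroup Hn] [InnerProductSpace ℂ Hn] {n : ℕ} (tp : TensorPowerStructure H Hn n)

/-- The symmetric tensor `∑ σ, x (σ 1) ⊗ ⋯ ⊗ x (σ n)`, without the factor `1 / n!`, as a
multilinear map into the symmetric subspace. -/
def symTensor : MultilinearMap ℂ (fun _ : Fin n => H) (symSubspace tp) :=
  (∑ σ : Equiv.Perm (Fin n), tp.embMultilinear.domDomCongr σ).codRestrict (symSubspace tp)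
    fun x => Submodule.le_topologicalClosure _
      (Submodule.subset_span ⟨x, sum_apply _ _ x⟩)

theorem coe_symTensor (x : Fin n → H) :
    (tp.symTensor x : Hn) = ∑ σ : Equiv.Perm (Fin n), tp.emb (x ∘ σ) :=
  sum_apply _ _ x

theorem norm_symTensor_le (x : Fin n → H) : ‖tp.symTensor x‖ ≤ n.factorial * ∏ i, ‖x i‖ := by
  rw [Submodule.coe_norm, coe_symTensor]
  refine (norm_sum_le_of_le _ (n := fun _ => ∏ i, ‖x i‖) fun σ _ => ?_).trans_eq ?_
  · rw [norm_emb]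
    exact (Equiv.prod_comp σ fun i => ‖x i‖).le
  · rw [Finset.sum_const, Finset.card_univ, Fintype.card_perm, Fintype.card_fin, nsmul_eq_mul]

theorem inner_emb_const_symTensor (y : H) (x : Fin n → H) :
    ⟪tp.emb fun _ => y, (tp.symTensor x : Hn)⟫_ℂ = n.factorial * ∏ i, ⟪y, x i⟫_ℂ := by
  have hperm : ∀ σ : Equiv.Perm (Fin n),
      ⟪tp.emb fun _ => y, tp.emb (x ∘ σ)⟫_ℂ = ∏ i, ⟪y, x i⟫_ℂ := fun σ => by
    rw [tp.inner_emb]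
    exact Equiv.prod_comp σ fun i => ⟪y, x i⟫_ℂ
  rw [coe_symTensor, inner_sum, Finset.sum_congr rfl fun σ _ => hperm σ, Finset.sum_const,
    Finset.card_univ, Fintype.card_perm, Fintype.card_fin, nsmul_eq_mul]

theorem pow_le_norm_symTensor {x : Fin n → H} (hx : ∀ i, ‖x i‖ = 1) :
    ((1 / 4) ^ n) ^ n ≤ ‖tp.symTensor x‖ := by
  obtain ⟨y, hy, hyx⟩ :=
    exists_forall_pow_card_le_norm_inner (𝕜 := ℂ) x Finset.univ fun i _ => hx i
  rw [Finset.card_univ, Fintype.card_fin] at hy hyx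
  have hy1 : ‖y‖ ≤ 1 := hy.trans (sub_le_self _ (by positivity))
  calc ((1 / 4) ^ n) ^ n = ∏ _i : Fin n, (1 / 4 : ℝ) ^ n := by simp
    _ ≤ ∏ i, ‖⟪y, x i⟫_ℂ‖ := Finset.prod_le_prod (fun _ _ => by positivity) hyx
    _ ≤ n.factorial * ∏ i, ‖⟪y, x i⟫_ℂ‖ :=
      le_mul_of_one_le_left (by positivity) (Nat.one_le_cast.2 n.factorial_pos)
    _ = ‖⟪tp.emb fun _ => y, (tp.symTensor x : Hn)⟫_ℂ‖ := by
      rw [inner_emb_const_symTensor, norm_mul, norm_prod, Complex.norm_natCast]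
    _ ≤ ‖tp.emb fun _ => y‖ * ‖tp.symTensor x‖ := norm_inner_le_norm _ _
    _ ≤ ‖tp.symTensor x‖ := by
      rw [norm_emb]
      exact mul_le_of_le_one_left (norm_nonneg _)
        (Finset.prod_le_one (fun _ _ => norm_nonneg _) fun _ _ => hy1)

instance completeSpace_symSubspace [CompleteSpace Hn] : CompleteSpace (symSubspace tp) :=
  (Submodule.isClosed_topologicalClosure _).completeSpace_coe

end TensorPowerStructure

namespace IsTensorPowerOp

variable {H Hn : Type*} [NormedAddCommGroup H] [InnerProductSpace ℂ H]
  [NormedAddCommGroup Hn] [InnerProductSpace ℂ Hn] {n : ℕ}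
  {tp : TensorPowerStructure H Hn n} {T : H →L[ℂ] H} {Tn : Hn →L[ℂ] Hn}
  {Ts : symSubspace tp →L[ℂ] symSubspace tp}

theorem apply_coe_symTensor (hTn : IsTensorPowerOp tp T Tn) (x : Fin n → H) :
    Tn (tp.symTensor x) = tp.symTensor fun i => T (x i) := by
  simp only [tp.coe_symTensor, map_sum]
  exact Finset.sum_congr rfl fun σ _ => hTn (x ∘ σ)

theorem apply_mem_symSubspace (hTn : IsTensorPowerOp tp T Tn) {v : Hn}
    (hv : v ∈ symSubspace tp) : Tn v ∈ symSubspace tp := by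
  have hspan : Submodule.span ℂ {y | ∃ x : Fin n → H, y = ∑ σ : Equiv.Perm (Fin n),
      tp.emb (x ∘ σ)} ≤ (symSubspace tp).comap Tn.toLinearMap := by
    rw [Submodule.span_le]
    rintro _ ⟨x, rfl⟩
    rw [← tp.coe_symTensor, SetLike.mem_coe, Submodule.mem_comap, coe_coe,
      hTn.apply_coe_symTensor]
    exact (tp.symTensor _).2
  exact Submodule.topologicalClosure_minimal _ hspan
    ((Submodule.isClosed_topologicalClosure _).preimage Tn.continuous) hv

theorem norm_apply_symTensor_sub_prod_smul_le (hTn : IsTensorPowerOp tp T Tn)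
    (hTs : ∀ v, (Ts v : Hn) = Tn v) {l : Fin n → ℂ} {x : Fin n → H} (hx : ∀ j, ‖x j‖ = 1)
    {ε : ℝ} (hε : 0 ≤ ε) (hxε : ∀ j, ‖T (x j) - l j • x j‖ ≤ ε) :
    ‖Ts (tp.symTensor x) - (∏ j, l j) • tp.symTensor x‖ ≤
      n.factorial * n * max ‖T‖ ‖l‖ ^ (n - 1) * ε := by
  let a : Fin n → H := fun j => T (x j)
  let b : Fin n → H := fun j => l j • x j
  have ha : ‖a‖ ≤ ‖T‖ := (pi_norm_le_iff_of_nonneg (norm_nonneg _)).2 fun j =>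
    (T.le_opNorm _).trans_eq (by rw [hx, mul_one])
  have hb : ‖b‖ ≤ ‖l‖ := (pi_norm_le_iff_of_nonneg (norm_nonneg _)).2 fun j => by
    rw [norm_smul, hx, mul_one]
    exact norm_le_pi_norm l j
  have hab : ‖a - b‖ ≤ ε := (pi_norm_le_iff_of_nonneg hε).2 hxε
  have hTs_apply : Ts (tp.symTensor x) = tp.symTensor a :=
    Subtype.ext ((hTs _).trans (hTn.apply_coe_symTensor x))
  have hlip := tp.symTensor.norm_image_sub_le_of_bound (by positivity) tp.norm_symTensor_le a b
  rw [Fintype.card_fin, tp.symTensor.map_smul_univ, ← hTs_apply] at hlip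
  exact hlip.trans (by gcongr)

theorem prod_mem_approximatePointSpectrum (hTn : IsTensorPowerOp tp T Tn)
    (hTs : ∀ v, (Ts v : Hn) = Tn v) {l : Fin n → ℂ}
    (hl : ∀ j, l j ∈ approximatePointSpectrum T) :
    ∏ j, l j ∈ approximatePointSpectrum Ts := by
  intro hbelow
  obtain ⟨c, hc, hbound⟩ := antilipschitzWith_iff_exists_mul_le_norm.1 hbelow
  let M : ℝ := n.factorial * n * max ‖T‖ ‖l‖ ^ (n - 1)
  let κ : ℝ := c * ((1 / 4) ^ n) ^ n
  have hκ : 0 < κ := by positivity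
  obtain ⟨ε, hε, hMε⟩ : ∃ ε > 0, M * ε < κ := exists_pos_mul_lt hκ M
  choose x hx hxε using fun j => exists_norm_eq_one_of_mem_approximatePointSpectrum (hl j) hε
  refine hMε.not_ge ?_
  calc κ ≤ c * ‖tp.symTensor x‖ :=
      mul_le_mul_of_nonneg_left (tp.pow_le_norm_symTensor hx) hc.le
    _ ≤ ‖(∏ j, l j) • tp.symTensor x - Ts (tp.symTensor x)‖ := hbound _
    _ = ‖Ts (tp.symTensor x) - (∏ j, l j) • tp.symTensor x‖ := norm_sub_rev _ _
    _ ≤ M * ε :=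
      hTn.norm_apply_symTensor_sub_prod_smul_le hTs hx hε.le fun j => (hxε j).le

variable [CompleteSpace H] [CompleteSpace Hn]

theorem coe_adjoint_apply (hTn : IsTensorPowerOp tp T Tn) (hTs : ∀ v, (Ts v : Hn) = Tn v)
    (v : symSubspace tp) : (adjoint Ts v : Hn) = adjoint Tn v := by
  have hadj : adjoint Ts v = ⟨adjoint Tn v, hTn.adjoint.apply_mem_symSubspace v.2⟩ :=
    ext_inner_left ℂ fun w => by
      rw [adjoint_inner_right, Submodule.coe_inner, Submodule.coe_inner, hTs, adjoint_inner_right]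
  rw [hadj]

theorem spectrum_symSubspace_subset (hTn : IsTensorPowerOp tp T Tn)
    (hTs : ∀ v, (Ts v : Hn) = Tn v) : spectrum ℂ Ts ⊆ spectrum ℂ Tn :=
  spectrum_subset_of_intertwines (J := (symSubspace tp).subtypeₗᵢ) (fun v => (hTs v).symm)
    fun v => (hTn.coe_adjoint_apply hTs v).symm

theorem prod_mem_spectrum (hTn : IsTensorPowerOp tp T Tn) (hTs : ∀ v, (Ts v : Hn) = Tn v)
    {l : Fin n → ℂ} (hl : ∀ j, l j ∈ spectrum ℂ T) : ∏ j, l j ∈ spectrum ℂ Ts := by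
  let U : Set ℂ := spectrum ℂ T \ approximatePointSpectrum T
  let V : Set ℂ := star ⁻¹' (spectrum ℂ (adjoint T) \ approximatePointSpectrum (adjoint T))
  have hVK : V ⊆ spectrum ℂ T := fun z hz => (star_mem_spectrum_adjoint_iff T).1 hz.1
  have hUV : Disjoint U V := Set.disjoint_left.2 fun z hzU hzV =>
    (mem_approximatePointSpectrum_or_star_mem hzU.1).elim hzU.2 hzV.2
  obtain ⟨m, hm, hprod, hmU | hmV⟩ := exists_prod_eq_and_forall_notMem_or_forall_notMem
    (spectrum.isCompact T) (isOpen_spectrum_diff_approximatePointSpectrum T)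
    ((isOpen_spectrum_diff_approximatePointSpectrum (adjoint T)).preimage continuous_star)
    Set.sdiff_subset hVK hUV hl <;> rw [← hprod]
  · have hm_approx : ∀ j, m j ∈ approximatePointSpectrum T := fun j =>
      by_contra fun hj => hmU j ⟨hm j, hj⟩
    exact approximatePointSpectrum_subset_spectrum _
      (hTn.prod_mem_approximatePointSpectrum hTs hm_approx)
  · have hm_approx : ∀ j, star (m j) ∈ approximatePointSpectrum (adjoint T) := fun j =>
      by_contra fun hj => hmV j ⟨(star_mem_spectrum_adjoint_iff T).2 (hm j), hj⟩
    rw [← star_mem_spectrum_adjoint_iff, star_prod]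
    exact approximatePointSpectrum_subset_spectrum _
      (hTn.adjoint.prod_mem_approximatePointSpectrum (hTn.coe_adjoint_apply hTs) hm_approx)

theorem spectrum_symSubspace_eq (hTn : IsTensorPowerOp tp T Tn)
    (hTs : ∀ v, (Ts v : Hn) = Tn v) : spectrum ℂ Ts =
      {z | ∃ l : Fin n → ℂ, (∀ j, l j ∈ spectrum ℂ T) ∧ z = ∏ j, l j} :=
  Set.Subset.antisymm
    (fun _ hz => hTn.exists_eq_prod_of_mem_spectrum (hTn.spectrum_symSubspace_subset hTs hz))
    (by rintro _ ⟨l, hl, rfl⟩; exact hTn.prod_mem_spectrum hTs hl)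

theorem spectrum_symSubspace_eq_spectrum (hTn : IsTensorPowerOp tp T Tn)
    (hTs : ∀ v, (Ts v : Hn) = Tn v) : spectrum ℂ Ts = spectrum ℂ Tn :=
  (hTn.spectrum_symSubspace_subset hTs).antisymm fun _ hz =>
    hTn.spectrum_symSubspace_eq hTs ▸ hTn.exists_eq_prod_of_mem_spectrum hz

theorem norm_symSubspace_le_pow (hTn : IsTensorPowerOp tp T Tn)
    (hTs : ∀ v, (Ts v : Hn) = Tn v) : ‖Ts‖ ≤ ‖T‖ ^ n :=
  opNorm_le_bound _ (by positivity) fun v => by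
    rw [Submodule.coe_norm, hTs]
    exact Tn.le_of_opNorm_le hTn.norm_le_pow v

end IsTensorPowerOp
end SymmetricPower

/-- The spectra of the symmetric second quantization `Γ^⊙(T)` (on the symmetric
Fock space `⊕ₙ H^{⊙n}`) and of the second quantization `Γ(T)` (on the full Fock
space `⊕ₙ H^{⊗n}`) of a strict contraction `T` coincide, and both equal
`{1} ∪ closure( ⋃_{n≥1} { λ₁⋯λₙ : λⱼ ∈ σ(T) } )`. -/
theorem spectrum_symmetricSecondQuantization_eq
    {H F F' : Type*} [NormedAddCommGroup H] [InnerProductSpace ℂ H] [CompleteSpace H]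
    [Nontrivial H]
    [NormedAddCommGroup F] [InnerProductSpace ℂ F] [CompleteSpace F]
    [NormedAddCommGroup F'] [InnerProductSpace ℂ F'] [CompleteSpace F']
    (Hn : ℕ → Type*) [∀ n, NormedAddCommGroup (Hn n)]
    [∀ n, InnerProductSpace ℂ (Hn n)] [∀ n, CompleteSpace (Hn n)]
    (tp : ∀ n, TensorPowerStructure H (Hn n) n)
    -- the full Fock space `F = Γ(H)`
    (J : ∀ n, Hn n →ₗᵢ[ℂ] F)
    (horth : ∀ n m, n ≠ m → ∀ (x : Hn n) (y : Hn m), ⟪J n x, J m y⟫_ℂ = 0)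
    (hdense : Dense ((Submodule.span ℂ
      (⋃ n : ℕ, Set.range (J n)) : Submodule ℂ F) : Set F))
    -- the symmetric Fock space `F' = Γ^⊙(H)`
    (J' : ∀ n, ↥(symSubspace (tp n)) →ₗᵢ[ℂ] F')
    (horth' : ∀ n m, n ≠ m →
      ∀ (x : symSubspace (tp n)) (y : symSubspace (tp m)), ⟪J' n x, J' m y⟫_ℂ = 0)
    (hdense' : Dense ((Submodule.span ℂ
      (⋃ n : ℕ, Set.range (J' n)) : Submodule ℂ F') : Set F'))
    (T : H →L[ℂ] H) (hT : ‖T‖ < 1)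
    (Tn : ∀ n, Hn n →L[ℂ] Hn n) (hTn : ∀ n, IsTensorPowerOp (tp n) T (Tn n))
    (Ts : ∀ n, ↥(symSubspace (tp n)) →L[ℂ] ↥(symSubspace (tp n)))
    (hTs : ∀ (n : ℕ) (x : symSubspace (tp n)), ((Ts n x : Hn n)) = Tn n x)
    (G : F →L[ℂ] F) (hG : ∀ (n : ℕ) (x : Hn n), G (J n x) = J n (Tn n x))
    (G' : F' →L[ℂ] F')
    (hG' : ∀ (n : ℕ) (x : symSubspace (tp n)), G' (J' n x) = J' n (Ts n x)) :
    spectrum ℂ G' = spectrum ℂ G ∧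
      spectrum ℂ G = {1} ∪ closure (⋃ n : ℕ,
        {z : ℂ | ∃ l : Fin (n + 1) → ℂ,
          (∀ j, l j ∈ spectrum ℂ T) ∧ z = ∏ j, l j}) := by
  have hJ : OrthogonalFamily ℂ Hn J := fun n m hnm x y => horth n m hnm x y
  have hJ' : OrthogonalFamily ℂ (fun n => symSubspace (tp n)) J' :=
    fun n m hnm x y => horth' n m hnm x y
  have hpow : Filter.Tendsto (fun n => ‖T‖ ^ n) Filter.cofinite (nhds 0) :=
    Nat.cofinite_eq_atTop ▸ tendsto_pow_atTop_nhds_zero_of_lt_one (norm_nonneg T) hT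
  have hTn_norm : Filter.Tendsto (fun n => ‖Tn n‖) Filter.cofinite (nhds 0) :=
    squeeze_zero (fun n => norm_nonneg (Tn n)) (fun n => (hTn n).norm_le_pow) hpow
  have hTs_norm : Filter.Tendsto (fun n => ‖Ts n‖) Filter.cofinite (nhds 0) :=
    squeeze_zero (fun n => norm_nonneg (Ts n))
      (fun n => (hTn n).norm_symSubspace_le_pow (hTs n)) hpow
  have hsym : ∀ n, spectrum ℂ (Ts n) = spectrum ℂ (Tn n) :=
    fun n => (hTn n).spectrum_symSubspace_eq_spectrum (hTs n)
  have hprod : ∀ n, spectrum ℂ (Tn n) = {z : ℂ | ∃ l : Fin n → ℂ,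
      (∀ j, l j ∈ spectrum ℂ T) ∧ z = ∏ j, l j} :=
    fun n => (hsym n).symm.trans ((hTn n).spectrum_symSubspace_eq (hTs n))
  rw [spectrum_eq_closure_iUnion_of_orthogonalFamily hJ hdense hG hTn_norm,
    spectrum_eq_closure_iUnion_of_orthogonalFamily hJ' hdense' hG' hTs_norm]
  refine ⟨by simp only [hsym], ?_⟩
  rw [← Set.union_iUnion_nat_succ, closure_union]
  simp [hprod]
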